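/- Let H^n and X^n be centered random vectors in ℝ^n with E[(H_k)²] = r_H(0) and E[(X_k)²] = r_X(0) for every coordinate k, and suppose H^n and X^n are independent, and let Z^n ∼ N(0, σ_Z²·I_n) with σ_Z² > 0 be independent of (H^n, X^n). Then E[‖H^n ⊙ X^n‖] ≤ √(n·r_H(0)·r_X(0)), and consequently the density of Y^n = H^n ⊙ X^n + Z^n is (c1,c2)-regular with c1 = 3/σ_Z² and c2 = (4/σ_Z²)·√(n·r_H(0)·r_X(0)). -/

import Mathlib

open MeasureTheory Real ProbabilityTheory
open scoped BigOperators ENNReal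

noncomputable section

/-- A probability density on `ℝⁿ` (Euclidean space): nonnegative, integrable, integrating to one. -/
def IsDensity {n : ℕ} (f : EuclideanSpace ℝ (Fin n) → ℝ) : Prop :=
  (∀ x, 0 ≤ f x) ∧ Integrable f ∧ (∫ x, f x) = 1

/-- `(c₁, c₂)`-regularity of a density (Polyanskiy–Wu): everywhere positive, differentiable,
and `‖∇ log f(x)‖ ≤ c₁‖x‖ + c₂`. -/
def IsRegularDensity {n : ℕ} (c₁ c₂ : ℝ) (f : EuclideanSpace ℝ (Fin n) → ℝ) : Prop :=
  (∀ x, 0 < f x) ∧ Differentiable ℝ f ∧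
    ∀ x : EuclideanSpace ℝ (Fin n),
      ‖gradient (fun y => Real.log (f y)) x‖ ≤ c₁ * ‖x‖ + c₂

/-- Kullback–Leibler divergence between two densities (natural logarithm). -/
def klDiv' {n : ℕ} (f g : EuclideanSpace ℝ (Fin n) → ℝ) : ℝ :=
  ∫ x, f x * Real.log (f x / g x)

/-- Mean vector of a density. -/
def meanVec {n : ℕ} (f : EuclideanSpace ℝ (Fin n) → ℝ) : Fin n → ℝ :=
  fun i => ∫ x, f x * x i

/-- Covariance matrix of a density. -/
def covMat {n : ℕ} (f : EuclideanSpace ℝ (Fin n) → ℝ) : Matrix (Fin n) (Fin n) ℝ :=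
  Matrix.of fun i j => ∫ x, f x * (x i - meanVec f i) * (x j - meanVec f j)

/-- The Gaussian density on `ℝⁿ` with mean vector `m` and covariance matrix `R`. -/
def gaussDensity {n : ℕ} (m : Fin n → ℝ) (R : Matrix (Fin n) (Fin n) ℝ)
    (x : EuclideanSpace ℝ (Fin n)) : ℝ :=
  (2 * π) ^ (-(n : ℝ) / 2) * R.det ^ (-(1 : ℝ) / 2) *
    Real.exp (-(1 / 2) * ∑ i, ∑ j, (x i - m i) * R⁻¹ i j * (x j - m j))

/-- `D(f) = D(f ‖ g)` where `g` is the Gaussian density with the same mean vector and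
covariance matrix as `f`. -/
def KLtoGauss {n : ℕ} (f : EuclideanSpace ℝ (Fin n) → ℝ) : ℝ :=
  klDiv' f (gaussDensity (meanVec f) (covMat f))

/-- The vector `(X_k, X_{k+1}, …, X_{k+n-1})` of a process, as a point of Euclidean space. -/
def pathVec {Ω : Type*} (X : ℕ → Ω → ℝ) (k n : ℕ) (ω : Ω) : EuclideanSpace ℝ (Fin n) :=
  (WithLp.equiv 2 (Fin n → ℝ)).symm fun i : Fin n => X (k + i) ω

/-- The centered isotropic Gaussian density on `ℝⁿ` with covariance `v • Iₙ`. -/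
def isoGaussDensity (n : ℕ) (v : ℝ) (x : EuclideanSpace ℝ (Fin n)) : ℝ :=
  (2 * π * v) ^ (-(n : ℝ) / 2) * Real.exp (-‖x‖ ^ 2 / (2 * v))

/-- Log-concavity of a nonnegative function. -/
def LogConcaveFn {n : ℕ} (f : EuclideanSpace ℝ (Fin n) → ℝ) : Prop :=
  ∀ x y : EuclideanSpace ℝ (Fin n), ∀ t : ℝ, 0 ≤ t → t ≤ 1 →
    f x ^ t * f y ^ (1 - t) ≤ f (t • x + (1 - t) • y)

/-- A zero-mean Gaussian random vector with covariance matrix `R`: every linear functional of it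
is a centered real Gaussian with the corresponding variance. -/
def IsCenteredGaussianVec {Ω : Type*} [MeasurableSpace Ω] {n : ℕ} (P : Measure Ω)
    (W : Ω → EuclideanSpace ℝ (Fin n)) (R : Matrix (Fin n) (Fin n) ℝ) : Prop :=
  ∀ a : Fin n → ℝ, Measure.map (fun ω => ∑ i, a i * W ω i) P
    = gaussianReal 0 (Real.toNNReal (∑ i, ∑ j, a i * R i j * a j))

/-- Hadamard (element-wise) product of two Euclidean vectors. -/
def hadamard {n : ℕ} (u v : EuclideanSpace ℝ (Fin n)) : EuclideanSpace ℝ (Fin n) :=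
  (WithLp.equiv 2 (Fin n → ℝ)).symm fun i => u i * v i

end

noncomputable section
open MeasureTheory Real ProbabilityTheory

section Helpers

variable {Ω : Type*} [MeasurableSpace Ω] {n : ℕ}

lemma isoG_pos {v : ℝ} (hv : 0 < v) (x : EuclideanSpace ℝ (Fin n)) :
    0 < isoGaussDensity n v x := by
  unfold isoGaussDensity
  have : 0 < 2 * π * v := by positivity
  positivity

lemma isoG_continuous (v : ℝ) : Continuous (isoGaussDensity n v) := by
  unfold isoGaussDensity
  fun_prop

lemma isoG_le {v : ℝ} (hv : 0 < v) (x : EuclideanSpace ℝ (Fin n)) :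
    isoGaussDensity n v x ≤ (2 * π * v) ^ (-(n : ℝ) / 2) := by
  unfold isoGaussDensity
  have h0 : 0 < 2 * π * v := by positivity
  have h1 : Real.exp (-‖x‖ ^ 2 / (2 * v)) ≤ 1 := by
    rw [Real.exp_le_one_iff]
    apply div_nonpos_of_nonpos_of_nonneg
    · have := sq_nonneg ‖x‖
      linarith
    · positivity
  have h2 : 0 ≤ (2 * π * v) ^ (-(n : ℝ) / 2) := by positivity
  nlinarith

lemma isoG_integrable (P : Measure Ω) [IsProbabilityMeasure P] {v : ℝ} (hv : 0 < v)
    {W : Ω → EuclideanSpace ℝ (Fin n)} (hW : Measurable W) (y : EuclideanSpace ℝ (Fin n)) :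
    Integrable (fun ω => isoGaussDensity n v (y - W ω)) P := by
  refine Integrable.of_bound (C := (2 * π * v) ^ (-(n : ℝ) / 2)) ?_ ?_
  · exact ((isoG_continuous v).measurable.comp (measurable_const.sub hW)).aestronglyMeasurable
  · refine Filter.Eventually.of_forall fun ω => ?_
    rw [Real.norm_of_nonneg (isoG_pos hv _).le]
    exact isoG_le hv _

/-- derivative of the shifted gaussian -/
def isoG' (n : ℕ) (v : ℝ) (z : EuclideanSpace ℝ (Fin n)) :
    EuclideanSpace ℝ (Fin n) →L[ℝ] ℝ :=
  (-(isoGaussDensity n v z / v)) • innerSL ℝ z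

lemma isoG_hasFDerivAt {v : ℝ} (hv : 0 < v) (y w : EuclideanSpace ℝ (Fin n)) :
    HasFDerivAt (fun y => isoGaussDensity n v (y - w)) (isoG' n v (y - w)) y := by
  have h1 : HasFDerivAt (fun y : EuclideanSpace ℝ (Fin n) => y - w)
      (ContinuousLinearMap.id ℝ _) y := (hasFDerivAt_id y).sub_const w
  have h2 := (((h1.norm_sq.neg.mul_const ((2 * v)⁻¹)).exp).const_mul
    ((2 * π * v) ^ (-(n : ℝ) / 2)))
  unfold isoG' isoGaussDensity
  simp only [div_eq_mul_inv] at h2 ⊢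
  refine h2.congr_fderiv ?_
  ext u
  simp
  field_simp

lemma isoG'_norm {v : ℝ} (hv : 0 < v) (z : EuclideanSpace ℝ (Fin n)) :
    ‖isoG' n v z‖ = isoGaussDensity n v z / v * ‖z‖ := by
  unfold isoG'
  rw [norm_smul, innerSL_apply_norm, norm_neg, Real.norm_of_nonneg]
  exact div_nonneg (isoG_pos hv z).le hv.le

lemma isoG'_continuous (v : ℝ) : Continuous (isoG' n v) := by
  unfold isoG'
  have := isoG_continuous (n := n) v
  fun_prop

lemma density_hasFDerivAt (P : Measure Ω) [IsProbabilityMeasure P] {v : ℝ} (hv : 0 < v)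
    {W : Ω → EuclideanSpace ℝ (Fin n)} (hW : Measurable W) (hWi : Integrable (fun ω => ‖W ω‖) P)
    (y : EuclideanSpace ℝ (Fin n)) :
    HasFDerivAt (fun y => ∫ ω, isoGaussDensity n v (y - W ω) ∂P)
      (∫ ω, isoG' n v (y - W ω) ∂P) y := by
  set C := (2 * π * v) ^ (-(n : ℝ) / 2) with hC
  have hC0 : 0 ≤ C := by positivity
  refine hasFDerivAt_integral_of_dominated_of_fderiv_le (𝕜 := ℝ) (s := Metric.ball y 1)
    (F := fun y ω => isoGaussDensity n v (y - W ω))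
    (F' := fun y ω => isoG' n v (y - W ω))
    (bound := fun ω => C / v * (‖y‖ + 1 + ‖W ω‖)) (Metric.ball_mem_nhds y one_pos) ?_ ?_ ?_ ?_ ?_ ?_
  · exact Filter.Eventually.of_forall fun x => (isoG_integrable P hv hW x).aestronglyMeasurable
  · exact isoG_integrable P hv hW y
  · exact (isoG'_continuous v).comp_aestronglyMeasurable
      (measurable_const.sub hW).aestronglyMeasurable
  · refine Filter.Eventually.of_forall fun ω x hx => ?_
    rw [isoG'_norm hv]
    have h1 : ‖x - W ω‖ ≤ ‖y‖ + 1 + ‖W ω‖ := by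
      have h2 : ‖x - y‖ < 1 := by simpa [dist_eq_norm] using hx
      have h3 : ‖x‖ ≤ ‖x - y‖ + ‖y‖ := by simpa using norm_add_le (x - y) y
      have := norm_sub_le x (W ω)
      linarith
    have h4 := isoG_le hv (x - W ω)
    have h5 := (isoG_pos hv (x - W ω)).le
    gcongr
  · exact ((integrable_const _).add hWi).const_mul _
  · exact Filter.Eventually.of_forall fun ω x _ => isoG_hasFDerivAt hv x (W ω)

lemma density_pos (P : Measure Ω) [IsProbabilityMeasure P] {v : ℝ} (hv : 0 < v)
    {W : Ω → EuclideanSpace ℝ (Fin n)} (hW : Measurable W) (y : EuclideanSpace ℝ (Fin n)) :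
    0 < ∫ ω, isoGaussDensity n v (y - W ω) ∂P := by
  rw [integral_pos_iff_support_of_nonneg (fun ω => (isoG_pos hv _).le) (isoG_integrable P hv hW y)]
  have : Function.support (fun ω => isoGaussDensity n v (y - W ω)) = Set.univ := by
    ext ω
    simp [(isoG_pos hv (y - W ω)).ne']
  rw [this]
  simp

lemma density_deriv_bound (P : Measure Ω) [IsProbabilityMeasure P] {v : ℝ} (hv : 0 < v)
    {W : Ω → EuclideanSpace ℝ (Fin n)} (hW : Measurable W) (hWi : Integrable (fun ω => ‖W ω‖) P)
    (y : EuclideanSpace ℝ (Fin n)) :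
    ‖∫ ω, isoG' n v (y - W ω) ∂P‖ ≤
      (‖y‖ + ∫ ω, ‖W ω‖ ∂P) / v * ∫ ω, isoGaussDensity n v (y - W ω) ∂P := by
  set C := (2 * π * v) ^ (-(n : ℝ) / 2) with hC
  have hC0 : 0 ≤ C := by positivity
  have hφ : Integrable (fun ω => ‖y - W ω‖) P := by
    refine ((integrable_const ‖y‖).add hWi).mono'
      (measurable_const.sub hW).norm.aestronglyMeasurable ?_
    refine Filter.Eventually.of_forall fun ω => ?_
    simpa using norm_sub_le y (W ω)
  set a := ∫ ω, ‖y - W ω‖ ∂P with ha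
  have ha0 : 0 ≤ a := integral_nonneg fun ω => norm_nonneg _
  have hale : a ≤ ‖y‖ + ∫ ω, ‖W ω‖ ∂P := by
    calc a ≤ ∫ ω, (‖y‖ + ‖W ω‖) ∂P :=
          integral_mono hφ ((integrable_const ‖y‖).add hWi) fun ω => norm_sub_le y (W ω)
      _ = _ := by rw [integral_add (integrable_const _) hWi]; simp
  have hg := isoG_integrable P hv hW y
  have hφg : Integrable (fun ω => isoGaussDensity n v (y - W ω) * ‖y - W ω‖) P := by
    refine (hφ.const_mul C).mono' (hg.aestronglyMeasurable.mul hφ.aestronglyMeasurable) ?_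
    refine Filter.Eventually.of_forall fun ω => ?_
    rw [Real.norm_of_nonneg (mul_nonneg (isoG_pos hv _).le (norm_nonneg _))]
    have := isoG_le hv (y - W ω)
    gcongr
  set G := C * Real.exp (-a ^ 2 / (2 * v)) with hG
  -- Chebyshev association
  have key : ∀ ω, isoGaussDensity n v (y - W ω) * ‖y - W ω‖ ≤
      a * isoGaussDensity n v (y - W ω) + G * (‖y - W ω‖ - a) := by
    intro ω
    have hmono : ∀ s t : ℝ, 0 ≤ s → s ≤ t →
        C * Real.exp (-t ^ 2 / (2 * v)) ≤ C * Real.exp (-s ^ 2 / (2 * v)) := by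
      intro s t hs hst
      gcongr
    have hgd : isoGaussDensity n v (y - W ω) = C * Real.exp (-‖y - W ω‖ ^ 2 / (2 * v)) := rfl
    rcases le_total ‖y - W ω‖ a with h | h
    · have := hmono _ _ (norm_nonneg _) h
      rw [← hgd, ← hG] at this
      nlinarith
    · have := hmono _ _ ha0 h
      rw [← hgd, ← hG] at this
      nlinarith
  have hint : ∫ ω, isoGaussDensity n v (y - W ω) * ‖y - W ω‖ ∂P ≤
      a * ∫ ω, isoGaussDensity n v (y - W ω) ∂P := by
    have hi2 : Integrable (fun ω => G * (‖y - W ω‖ - a)) P :=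
      (hφ.sub (integrable_const a)).const_mul G
    calc _ ≤ ∫ ω, (a * isoGaussDensity n v (y - W ω) + G * (‖y - W ω‖ - a)) ∂P :=
          integral_mono hφg ((hg.const_mul a).add hi2) key
      _ = _ := by
        rw [integral_add (hg.const_mul a) hi2, integral_const_mul, integral_const_mul,
          integral_sub hφ (integrable_const a)]
        simp [← ha]
  have hp := (density_pos P hv hW y).le
  calc ‖∫ ω, isoG' n v (y - W ω) ∂P‖ ≤ ∫ ω, ‖isoG' n v (y - W ω)‖ ∂P :=
        norm_integral_le_integral_norm _
    _ = ∫ ω, (isoGaussDensity n v (y - W ω) * ‖y - W ω‖) * v⁻¹ ∂P := by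
        refine integral_congr_ae (Filter.Eventually.of_forall fun ω => ?_)
        simp only [isoG'_norm hv]
        ring
    _ = (∫ ω, (isoGaussDensity n v (y - W ω) * ‖y - W ω‖) ∂P) * v⁻¹ := integral_mul_const _ _
    _ ≤ (a * ∫ ω, isoGaussDensity n v (y - W ω) ∂P) * v⁻¹ := by gcongr
    _ ≤ ((‖y‖ + ∫ ω, ‖W ω‖ ∂P) * ∫ ω, isoGaussDensity n v (y - W ω) ∂P) * v⁻¹ := by gcongr
    _ = _ := by ring

lemma density_law (P : Measure Ω) [IsProbabilityMeasure P] {v : ℝ} (hv : 0 < v)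
    {W Z : Ω → EuclideanSpace ℝ (Fin n)} (hW : Measurable W) (hZ : Measurable Z)
    (hZlaw : Measure.map Z P = volume.withDensity fun x => ENNReal.ofReal (isoGaussDensity n v x))
    (hind : IndepFun W Z P) :
    Measure.map (fun ω => W ω + Z ω) P = volume.withDensity
      (fun y => ENNReal.ofReal (∫ ω, isoGaussDensity n v (y - W ω) ∂P)) := by
  have hgm : Measurable (fun x => ENNReal.ofReal (isoGaussDensity n v x)) :=
    (isoG_continuous v).measurable.ennreal_ofReal
  have hprod := (indepFun_iff_map_prod_eq_prod_map_map hW.aemeasurable hZ.aemeasurable).1 hind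
  have hμ : IsProbabilityMeasure (P.map W) := Measure.isProbabilityMeasure_map hW.aemeasurable
  have hν : IsProbabilityMeasure (P.map Z) := Measure.isProbabilityMeasure_map hZ.aemeasurable
  ext A hA
  have hI : Measurable (A.indicator (1 : EuclideanSpace ℝ (Fin n) → ℝ≥0∞)) :=
    measurable_one.indicator hA
  have hadd : Measurable (fun p : EuclideanSpace ℝ (Fin n) × EuclideanSpace ℝ (Fin n) =>
      p.1 + p.2) := measurable_fst.add measurable_snd
  have hIa : Measurable (fun p : EuclideanSpace ℝ (Fin n) × EuclideanSpace ℝ (Fin n) =>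
      A.indicator (1 : EuclideanSpace ℝ (Fin n) → ℝ≥0∞) (p.1 + p.2)) := hI.comp hadd
  have hWZ : Measurable (fun ω => W ω + Z ω) := hW.add hZ
  have hIw : ∀ w : EuclideanSpace ℝ (Fin n), Measurable (fun z : EuclideanSpace ℝ (Fin n) =>
      A.indicator (1 : EuclideanSpace ℝ (Fin n) → ℝ≥0∞) (w + z)) := fun w =>
    hI.comp (measurable_const.add measurable_id)
  have hgy : ∀ y : EuclideanSpace ℝ (Fin n), Measurable (fun w : EuclideanSpace ℝ (Fin n) =>
      ENNReal.ofReal (isoGaussDensity n v (y - w))) := fun y =>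
    hgm.comp (measurable_const.sub measurable_id)
  have e1 : Measure.map (fun ω => W ω + Z ω) P A =
      ∫⁻ p, A.indicator 1 (p.1 + p.2) ∂((P.map W).prod (P.map Z)) := by
    rw [← hprod, lintegral_map hIa (hW.prodMk hZ), ← lintegral_indicator_one hA,
      lintegral_map hI hWZ]
  rw [e1, lintegral_prod _ hIa.aemeasurable, withDensity_apply _ hA,
    ← lintegral_indicator hA]
  have e2 : ∀ w, ∫⁻ z, A.indicator 1 (w + z) ∂(P.map Z) =
      ∫⁻ y, A.indicator 1 y * ENNReal.ofReal (isoGaussDensity n v (y - w)) := by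
    intro w
    rw [hZlaw, lintegral_withDensity_eq_lintegral_mul _ hgm (hIw w)]
    rw [← lintegral_sub_right_eq_self _ w]
    refine lintegral_congr fun y => ?_
    simp [mul_comm]
  simp_rw [e2]
  rw [lintegral_lintegral_swap]
  · refine lintegral_congr fun y => ?_
    rw [lintegral_const_mul _ (hgy y),
      lintegral_map (hgy y) hW,
      ← ofReal_integral_eq_lintegral_ofReal (isoG_integrable P hv hW y)
        (Filter.Eventually.of_forall fun ω => (isoG_pos hv _).le)]
    by_cases hy : y ∈ A <;> simp [hy]
  · exact ((hI.comp measurable_snd).mul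
      (hgm.comp (measurable_snd.sub measurable_fst))).aemeasurable

lemma density_regular (P : Measure Ω) [IsProbabilityMeasure P] {v : ℝ} (hv : 0 < v)
    {W : Ω → EuclideanSpace ℝ (Fin n)} (hW : Measurable W) (hWi : Integrable (fun ω => ‖W ω‖) P)
    {M : ℝ} (hM : ∫ ω, ‖W ω‖ ∂P ≤ M) :
    IsRegularDensity (3 / v) (4 / v * M) (fun y => ∫ ω, isoGaussDensity n v (y - W ω) ∂P) := by
  refine ⟨density_pos P hv hW, fun y => (density_hasFDerivAt P hv hW hWi y).differentiableAt, ?_⟩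
  intro y
  have hp := density_pos P hv hW y
  have hd := (density_hasFDerivAt P hv hW hWi y).log hp.ne'
  have hb := density_deriv_bound P hv hW hWi y
  rw [gradient, LinearIsometryEquiv.norm_map, hd.fderiv, norm_smul, norm_inv,
    Real.norm_of_nonneg hp.le, inv_mul_le_iff₀ hp]
  refine hb.trans ?_
  rw [mul_comm]
  have hm0 : 0 ≤ ∫ ω, ‖W ω‖ ∂P := integral_nonneg fun ω => norm_nonneg _
  gcongr
  have h1 : 3 / v * ‖y‖ + 4 / v * M = (3 * ‖y‖ + 4 * M) / v := by ring
  have h2 := norm_nonneg y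
  rw [h1]
  apply div_le_div_of_nonneg_right _ hv.le
  linarith

lemma hadamard_measurable {H X : Ω → EuclideanSpace ℝ (Fin n)} (hH : Measurable H)
    (hX : Measurable X) : Measurable (fun ω => hadamard (H ω) (X ω)) := by
  unfold hadamard
  refine (WithLp.measurable_toLp 2 (Fin n → ℝ)).comp (measurable_pi_lambda _ fun i => ?_)
  fun_prop

lemma hadamard_moment (P : Measure Ω) [IsProbabilityMeasure P]
    {H X : Ω → EuclideanSpace ℝ (Fin n)} (hH : Measurable H) (hX : Measurable X)
    {rH0 rX0 : ℝ}
    (hHint : ∀ k, Integrable (fun ω => (H ω k) ^ 2) P)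
    (hXint : ∀ k, Integrable (fun ω => (X ω k) ^ 2) P)
    (hH2 : ∀ k, ∫ ω, (H ω k) ^ 2 ∂P = rH0) (hX2 : ∀ k, ∫ ω, (X ω k) ^ 2 ∂P = rX0)
    (hHX : IndepFun H X P) :
    Integrable (fun ω => ‖hadamard (H ω) (X ω)‖) P ∧
      ∫ ω, ‖hadamard (H ω) (X ω)‖ ∂P ≤ Real.sqrt (n * rH0 * rX0) := by
  have hWm := hadamard_measurable hH hX
  have hik : ∀ k, IndepFun (fun ω => (H ω k) ^ 2) (fun ω => (X ω k) ^ 2) P := fun k =>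
    hHX.comp (φ := fun u : EuclideanSpace ℝ (Fin n) => (u k) ^ 2)
      (ψ := fun u : EuclideanSpace ℝ (Fin n) => (u k) ^ 2) (by fun_prop) (by fun_prop)
  have hint : ∀ k, Integrable (fun ω => (H ω k) ^ 2 * (X ω k) ^ 2) P := fun k =>
    (hik k).integrable_mul (hHint k) (hXint k)
  have hval : ∀ k, ∫ ω, (H ω k) ^ 2 * (X ω k) ^ 2 ∂P = rH0 * rX0 := fun k => by
    rw [(hik k).integral_fun_mul_eq_mul_integral (hHint k).aestronglyMeasurable
      (hXint k).aestronglyMeasurable, hH2, hX2]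
  have hsq : ∀ ω, ‖hadamard (H ω) (X ω)‖ ^ 2 = ∑ k, (H ω k) ^ 2 * (X ω k) ^ 2 := by
    intro ω
    rw [EuclideanSpace.norm_sq_eq]
    simp [hadamard, mul_pow]
  have hsqi : Integrable (fun ω => ‖hadamard (H ω) (X ω)‖ ^ 2) P := by
    simp_rw [hsq]
    exact integrable_finsetSum _ fun k _ => hint k
  have hsqv : ∫ ω, ‖hadamard (H ω) (X ω)‖ ^ 2 ∂P = n * rH0 * rX0 := by
    simp_rw [hsq]
    rw [integral_finsetSum _ fun k _ => hint k]
    simp [hval, mul_assoc]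
  have hL2 : MemLp (fun ω => ‖hadamard (H ω) (X ω)‖) 2 P :=
    (memLp_two_iff_integrable_sq hWm.norm.aestronglyMeasurable).2 hsqi
  have hi := hL2.integrable one_le_two
  refine ⟨hi, Real.le_sqrt_of_sq_le ?_⟩
  have hvar := variance_nonneg (fun ω => ‖hadamard (H ω) (X ω)‖) P
  rw [variance_eq_sub hL2] at hvar
  rw [← hsqv]
  simpa using hvar

end Helpers

theorem stmt13 {Ω : Type*} [MeasurableSpace Ω] (P : Measure Ω) [IsProbabilityMeasure P]
    {n : ℕ} (H X Z : Ω → EuclideanSpace ℝ (Fin n))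
    (hH : Measurable H) (hX : Measurable X) (hZ : Measurable Z)
    (rH0 rX0 : ℝ)
    (hHmean : ∀ k, ∫ ω, H ω k ∂P = 0) (hXmean : ∀ k, ∫ ω, X ω k ∂P = 0)
    (hHint : ∀ k, Integrable (fun ω => (H ω k) ^ 2) P)
    (hXint : ∀ k, Integrable (fun ω => (X ω k) ^ 2) P)
    (hH2 : ∀ k, ∫ ω, (H ω k) ^ 2 ∂P = rH0) (hX2 : ∀ k, ∫ ω, (X ω k) ^ 2 ∂P = rX0)
    (hHX : IndepFun H X P)
    (σ2 : ℝ) (hσ2 : 0 < σ2)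
    (hZlaw : Measure.map Z P = volume.withDensity fun x => ENNReal.ofReal (isoGaussDensity n σ2 x))
    (hZindep : IndepFun (fun ω => (H ω, X ω)) Z P) :
    (∫ ω, ‖hadamard (H ω) (X ω)‖ ∂P ≤ Real.sqrt (n * rH0 * rX0)) ∧
      ∃ pY : EuclideanSpace ℝ (Fin n) → ℝ,
        Measure.map (fun ω => hadamard (H ω) (X ω) + Z ω) P
            = volume.withDensity (fun x => ENNReal.ofReal (pY x)) ∧
          IsRegularDensity (3 / σ2) (4 / σ2 * Real.sqrt (n * rH0 * rX0)) pY := by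
  obtain ⟨hi, hb⟩ := hadamard_moment P hH hX hHint hXint hH2 hX2 hHX
  have hWm := hadamard_measurable hH hX
  have hm : Measurable (fun p : EuclideanSpace ℝ (Fin n) × EuclideanSpace ℝ (Fin n) =>
      hadamard p.1 p.2) := hadamard_measurable measurable_fst measurable_snd
  have hind : IndepFun (fun ω => hadamard (H ω) (X ω)) Z P :=
    hZindep.comp (ψ := id) hm measurable_id
  exact ⟨hb, _, density_law P hσ2 hWm hZ hZlaw hind, density_regular P hσ2 hWm hi hb⟩

end
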